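/- arXiv:math/0508227 — 2 statements merged into one kernel-verified Lean document; each statement's English description precedes it below -/
import Mathlib

section
/- Consider the generalized continued fraction with initial term b₀ = 8, partial numerators a_k = −9·(2k−1)², and partial denominators b_k = 20k + 8 for all k ≥ 1. Then the sequence of convergents h_n/k_n converges to −1 + 6/log 2. -/
open Filter Topology

/-!
A three-term recurrence of the form `u (n + 2) = (q (n + 1) + r n) * u (n + 1) - r n * q n * u n`
says that `u (n + 1) - q n * u n` is multiplied by `r n` at each step, so it is solved by solving
two first-order recurrences in succession. Hence a continued fraction with these coefficients has
convergents governed by the partial sums of `∑ (r 0 ⋯ r (k - 1)) / (q 0 ⋯ q k)`, which is Euler's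
correspondence between series and continued fractions. The choice `r k = 2 * k + 1`,
`q k = (2 * a + 1) ^ 2 * r k` gives a multiple of the series of `log (1 + a⁻¹)`, and `a = 1` is the
case of `log 2`.
-/

section Recurrence

variable {K : Type*} {q r u : ℕ → K}

lemma sub_mul_eq_mul_prod_of_recurrence [CommRing K]
    (hu : ∀ n, u (n + 2) = (q (n + 1) + r n) * u (n + 1) - r n * q n * u n) (n : ℕ) :
    u (n + 1) - q n * u n = (u 1 - q 0 * u 0) * ∏ k ∈ Finset.range n, r k := by
  induction n with
  | zero => simp
  | succ n ih =>
    calc u (n + 2) - q (n + 1) * u (n + 1)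
        = (u (n + 1) - q n * u n) * r n := by rw [hu]; ring
      _ = (u 1 - q 0 * u 0) * ∏ k ∈ Finset.range (n + 1), r k := by
        rw [ih, Finset.prod_range_succ, mul_assoc]

variable [Field K]

/-- The terms `(r 0 ⋯ r (k - 1)) / (q 0 ⋯ q k)` of the series which Euler's correspondence attaches
to the continued fraction with partial numerators `-(r n * q n)` and partial denominators
`q (n + 1) + r n`, both at index `n + 1`. -/
def eulerTerm (q r : ℕ → K) (k : ℕ) : K :=
  (∏ j ∈ Finset.range k, r j) / ∏ j ∈ Finset.range (k + 1), q j

lemma eulerTerm_const_mul (z : K) (hr : ∀ k, r k ≠ 0) (k : ℕ) :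
    eulerTerm (fun j ↦ z * r j) r k = (z ^ (k + 1) * r k)⁻¹ := by
  have hprod : ∏ j ∈ Finset.range k, r j ≠ 0 := Finset.prod_ne_zero_iff.2 fun j _ ↦ hr j
  rw [eulerTerm, Finset.prod_mul_distrib, Finset.prod_const, Finset.card_range,
    Finset.prod_range_succ, mul_left_comm, div_mul_cancel_left₀ hprod]

lemma eq_prod_mul_add_sum_eulerTerm_of_recurrence (hq : ∀ n, q n ≠ 0)
    (hu : ∀ n, u (n + 2) = (q (n + 1) + r n) * u (n + 1) - r n * q n * u n) (n : ℕ) :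
    u n = (∏ k ∈ Finset.range n, q k) *
      (u 0 + (u 1 - q 0 * u 0) * ∑ k ∈ Finset.range n, eulerTerm q r k) := by
  induction n with
  | zero => simp
  | succ n ih =>
    have hprod : ∏ k ∈ Finset.range (n + 1), q k ≠ 0 := Finset.prod_ne_zero_iff.2 fun k _ ↦ hq k
    have hterm : (∏ k ∈ Finset.range (n + 1), q k) * eulerTerm q r n =
        ∏ k ∈ Finset.range n, r k := mul_div_cancel₀ _ hprod
    calc u (n + 1)
        = q n * u n + (u 1 - q 0 * u 0) * ∏ k ∈ Finset.range n, r k :=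
          eq_add_of_sub_eq' (sub_mul_eq_mul_prod_of_recurrence hu n)
      _ = (∏ k ∈ Finset.range (n + 1), q k) *
          (u 0 + (u 1 - q 0 * u 0) * ∑ k ∈ Finset.range (n + 1), eulerTerm q r k) := by
        rw [ih, ← hterm, Finset.sum_range_succ, Finset.prod_range_succ]
        ring

theorem tendsto_convergents_of_tendsto_sum_eulerTerm [TopologicalSpace K] [ContinuousAdd K]
    [ContinuousMul K] [ContinuousInv₀ K] {num den : ℕ → K} {s : K} (hq : ∀ n, q n ≠ 0)
    (hs : Tendsto (fun n ↦ ∑ k ∈ Finset.range n, eulerTerm q r k) atTop (𝓝 s)) (hs0 : s ≠ 0)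
    (hnum0 : num 0 = 1) (hden0 : den 0 = 0) (hden1 : den 1 = 1)
    (hnum : ∀ n, num (n + 2) = (q (n + 1) + r n) * num (n + 1) - r n * q n * num n)
    (hden : ∀ n, den (n + 2) = (q (n + 1) + r n) * den (n + 1) - r n * q n * den n) :
    Tendsto (fun n ↦ num n / den n) atTop (𝓝 (num 1 - q 0 + s⁻¹)) := by
  let S (n : ℕ) : K := ∑ k ∈ Finset.range n, eulerTerm q r k
  have hconv (n : ℕ) : (1 + (num 1 - q 0) * S n) / S n = num n / den n := by
    have hprod : ∏ k ∈ Finset.range n, q k ≠ 0 := Finset.prod_ne_zero_iff.2 fun k _ ↦ hq k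
    rw [eq_prod_mul_add_sum_eulerTerm_of_recurrence hq hnum n,
      eq_prod_mul_add_sum_eulerTerm_of_recurrence hq hden n,
      mul_div_mul_left _ _ hprod, hnum0, hden0, hden1, mul_one, mul_zero, sub_zero, zero_add,
      one_mul]
  have hvalue : (1 + (num 1 - q 0) * s) / s = num 1 - q 0 + s⁻¹ := by
    rw [add_div, mul_div_cancel_right₀ _ hs0, one_div, add_comm]
  rw [← hvalue]
  exact (((hs.const_mul _).const_add _).div hs hs0).congr hconv

end Recurrence

section Logarithm

variable {a : ℝ}

lemma hasSum_eulerTerm_log_one_add_inv (ha : 0 < a) :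
    HasSum (eulerTerm (fun k ↦ (2 * a + 1) ^ 2 * (2 * (k : ℝ) + 1)) fun k ↦ 2 * (k : ℝ) + 1)
      (Real.log (1 + a⁻¹) / (2 * (2 * a + 1))) := by
  refine ((Real.hasSum_log_one_add_inv ha).div_const (2 * (2 * a + 1))).congr_fun fun k ↦ ?_
  rw [eulerTerm_const_mul _ fun j ↦ by positivity, one_div_pow, ← pow_mul]
  field_simp
  ring

theorem tendsto_convergents_log_one_add_inv (ha : 0 < a) {num den : ℕ → ℝ}
    (hnum0 : num 0 = 1) (hden0 : den 0 = 0) (hden1 : den 1 = 1)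
    (hnum : ∀ n : ℕ, num (n + 2) = ((2 * a + 1) ^ 2 * (2 * n + 3) + (2 * n + 1)) * num (n + 1) -
      (2 * a + 1) ^ 2 * (2 * n + 1) ^ 2 * num n)
    (hden : ∀ n : ℕ, den (n + 2) = ((2 * a + 1) ^ 2 * (2 * n + 3) + (2 * n + 1)) * den (n + 1) -
      (2 * a + 1) ^ 2 * (2 * n + 1) ^ 2 * den n) :
    Tendsto (fun n ↦ num n / den n) atTop
      (𝓝 (num 1 - (2 * a + 1) ^ 2 + 2 * (2 * a + 1) / Real.log (1 + a⁻¹))) := by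
  have hlog : 0 < Real.log (1 + a⁻¹) := Real.log_pos (lt_add_of_pos_right 1 (inv_pos.2 ha))
  have hlim := tendsto_convergents_of_tendsto_sum_eulerTerm (num := num) (den := den)
    (fun n ↦ by positivity) (hasSum_eulerTerm_log_one_add_inv ha).tendsto_sum_nat (by positivity)
    hnum0 hden0 hden1 (fun n ↦ by rw [hnum]; push_cast; ring)
    (fun n ↦ by rw [hden]; push_cast; ring)
  simpa only [Nat.cast_zero, mul_zero, zero_add, mul_one, inv_div] using hlim

end Logarithm

theorem euler_cf_log_two_alt
    (a b num den : ℕ → ℝ)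
    (hb0 : b 0 = 8)
    (ha : ∀ k : ℕ, 1 ≤ k → a k = -(9 * (2 * (k : ℝ) - 1) ^ 2))
    (hb : ∀ k : ℕ, 1 ≤ k → b k = 20 * (k : ℝ) + 8)
    (hnum0 : num 0 = 1) (hnum1 : num 1 = b 0)
    (hden0 : den 0 = 0) (hden1 : den 1 = 1)
    (hnum : ∀ n : ℕ, num (n + 2) = b (n + 1) * num (n + 1) + a (n + 1) * num n)
    (hden : ∀ n : ℕ, den (n + 2) = b (n + 1) * den (n + 1) + a (n + 1) * den n) :
    Tendsto (fun n : ℕ => num (n + 1) / den (n + 1)) atTop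
      (𝓝 (-1 + 6 / Real.log 2)) := by
  have hb_succ (n : ℕ) : b (n + 1) = (2 * 1 + 1) ^ 2 * (2 * n + 3) + (2 * n + 1) := by
    rw [hb _ n.succ_pos]
    push_cast
    ring
  have ha_succ (n : ℕ) : a (n + 1) = -((2 * 1 + 1) ^ 2 * (2 * n + 1) ^ 2) := by
    rw [ha _ n.succ_pos]
    push_cast
    ring
  have hlim := tendsto_convergents_log_one_add_inv one_pos hnum0 hden0 hden1
    (fun n ↦ by rw [hnum, hb_succ, ha_succ, neg_mul, ← sub_eq_add_neg])
    (fun n ↦ by rw [hden, hb_succ, ha_succ, neg_mul, ← sub_eq_add_neg])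
  have hvalue : num 1 - (2 * 1 + 1) ^ 2 + 2 * (2 * 1 + 1) / Real.log (1 + 1⁻¹) =
      -1 + 6 / Real.log 2 := by
    rw [hnum1, hb0]
    norm_num
  rw [hvalue] at hlim
  exact hlim.comp (tendsto_add_atTop_nat 1)
end

section
/- Consider the generalized continued fraction with initial term b₀ = 1, partial numerators a_k = 2k, and partial denominators b_k = 2k + 1 for all k ≥ 1. Then the sequence of convergents h_n/k_n converges to 1/(√e − 1). -/
open Filter Topology

/-!
For a parameter `m` (Euler's `1 / α`), numerators and denominators of
`(m - 1) + m / (2m - 1 + 2m / (3m - 1 + 3m / (4m - 1 + ⋯)))` solve one second-order recurrence.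
It factors: `u (n + 1) - m (n + 1) u n` merely changes sign at each step. Dividing the resulting
first-order recurrence by `m ^ (n + 1) (n + 1)!` makes it telescope, so `u n / (m ^ n n!)` is an
affine function of a partial sum of the exponential series at `-1 / m`. In the limit the numerators
give `e ^ (-1 / m)` and the denominators `1 - e ^ (-1 / m)`, with quotient `1 / (e ^ (1 / m) - 1)`.
The case `m = 2` is the expansion of `1 / (√e - 1)`.
-/

open scoped Nat

/-- The three-term recurrence obeyed by the numerators and by the denominators of the convergents
of Euler's continued fraction for `1 / (e ^ (1 / m) - 1)`, whose partial numerators are `m * k` and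
partial denominators `m * (k + 1) - 1`. Indices are shifted by one: `u n` stands for the term
`h_{n-1}` or `k_{n-1}`. -/
def IsEulerRecurrence {R : Type*} [CommRing R] (m : R) (u : ℕ → R) : Prop :=
  ∀ n : ℕ, u (n + 2) = (m * (n + 2) - 1) * u (n + 1) + m * (n + 1) * u n

namespace IsEulerRecurrence

theorem apply_succ {R : Type*} [CommRing R] {m : R} {u : ℕ → R}
    (hu : IsEulerRecurrence m u) (n : ℕ) :
    u (n + 1) = m * (n + 1) * u n + (-1) ^ n * (u 1 - m * u 0) := by
  induction n with
  | zero => simp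
  | succ n ih =>
    rw [hu n, pow_succ]
    push_cast
    linear_combination -ih

theorem div_pow_mul_factorial_eq {K : Type*} [Field K] [CharZero K] {m : K} {u : ℕ → K}
    (hu : IsEulerRecurrence m u) (hm : m ≠ 0) (n : ℕ) :
    u n / (m ^ n * n !) =
      u 0 + (u 1 - m * u 0) * (1 - ∑ k ∈ Finset.range (n + 1), (-m⁻¹) ^ k / (k ! : K)) := by
  induction n with
  | zero => simp
  | succ n ih =>
    have telescope : u (n + 1) / (m ^ (n + 1) * (n + 1)!) =
        u n / (m ^ n * n !) - (u 1 - m * u 0) * ((-m⁻¹) ^ (n + 1) / ((n + 1)! : K)) := by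
      have hn : (n ! : K) ≠ 0 := mod_cast n.factorial_ne_zero
      have hn1 : (n + 1 : K) ≠ 0 := n.cast_add_one_ne_zero
      rw [hu.apply_succ n, Nat.factorial_succ, neg_pow m⁻¹, inv_pow]
      push_cast
      field_simp
      ring
    rw [telescope, ih, Finset.sum_range_succ _ (n + 1)]
    ring

theorem tendsto_div_pow_mul_factorial {𝕜 : Type*} [RCLike 𝕜] {m : 𝕜} {u : ℕ → 𝕜}
    (hu : IsEulerRecurrence m u) (hm : m ≠ 0) :
    Tendsto (fun n : ℕ => u n / (m ^ n * n !)) atTop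
      (𝓝 (u 0 + (u 1 - m * u 0) * (1 - NormedSpace.exp (-m⁻¹)))) := by
  have partialSums : Tendsto (fun n : ℕ => ∑ k ∈ Finset.range (n + 1), (-m⁻¹) ^ k / (k ! : 𝕜))
      atTop (𝓝 (NormedSpace.exp (-m⁻¹))) :=
    (tendsto_add_atTop_iff_nat 1).mpr
      (NormedSpace.expSeries_div_hasSum_exp (-m⁻¹)).tendsto_sum_nat
  simp only [hu.div_pow_mul_factorial_eq hm]
  exact ((partialSums.const_sub 1).const_mul _).const_add _

theorem tendsto_div {𝕜 : Type*} [RCLike 𝕜] {m : 𝕜} {u v : ℕ → 𝕜}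
    (hu : IsEulerRecurrence m u) (hv : IsEulerRecurrence m v) (hm : m ≠ 0)
    (hlim : v 0 + (v 1 - m * v 0) * (1 - NormedSpace.exp (-m⁻¹)) ≠ 0) :
    Tendsto (fun n : ℕ => u n / v n) atTop
      (𝓝 ((u 0 + (u 1 - m * u 0) * (1 - NormedSpace.exp (-m⁻¹))) /
        (v 0 + (v 1 - m * v 0) * (1 - NormedSpace.exp (-m⁻¹))))) := by
  refine ((hu.tendsto_div_pow_mul_factorial hm).div
    (hv.tendsto_div_pow_mul_factorial hm) hlim).congr fun n => ?_
  have hscale : m ^ n * (n ! : 𝕜) ≠ 0 :=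
    mul_ne_zero (pow_ne_zero n hm) (mod_cast n.factorial_ne_zero)
  exact div_div_div_cancel_right₀ hscale (u n) (v n)

end IsEulerRecurrence

theorem isEulerRecurrence_of_coeff {R : Type*} [CommRing R] {m : R} {a b u : ℕ → R}
    (ha : ∀ k : ℕ, 1 ≤ k → a k = m * k) (hb : ∀ k : ℕ, 1 ≤ k → b k = m * (k + 1) - 1)
    (hu : ∀ n : ℕ, u (n + 2) = b (n + 1) * u (n + 1) + a (n + 1) * u n) :
    IsEulerRecurrence m u := by
  intro n
  rw [hu n, ha (n + 1) n.succ_pos, hb (n + 1) n.succ_pos]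
  push_cast
  ring

theorem euler_cf_sqrt_e_general {𝕜 : Type*} [RCLike 𝕜] {m : 𝕜}
    (hexp : NormedSpace.exp m⁻¹ ≠ 1) {a b num den : ℕ → 𝕜}
    (hb0 : b 0 = m - 1)
    (ha : ∀ k : ℕ, 1 ≤ k → a k = m * k)
    (hb : ∀ k : ℕ, 1 ≤ k → b k = m * (k + 1) - 1)
    (hnum0 : num 0 = 1) (hnum1 : num 1 = b 0)
    (hden0 : den 0 = 0) (hden1 : den 1 = 1)
    (hnum : ∀ n : ℕ, num (n + 2) = b (n + 1) * num (n + 1) + a (n + 1) * num n)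
    (hden : ∀ n : ℕ, den (n + 2) = b (n + 1) * den (n + 1) + a (n + 1) * den n) :
    Tendsto (fun n : ℕ => num (n + 1) / den (n + 1)) atTop
      (𝓝 (1 / (NormedSpace.exp m⁻¹ - 1))) := by
  have hm : m ≠ 0 := by
    rintro rfl
    simp at hexp
  have hnumLim : num 0 + (num 1 - m * num 0) * (1 - NormedSpace.exp (-m⁻¹)) =
      (NormedSpace.exp m⁻¹)⁻¹ := by
    rw [hnum0, hnum1, hb0, NormedSpace.exp_neg]
    ring
  have hdenLim : den 0 + (den 1 - m * den 0) * (1 - NormedSpace.exp (-m⁻¹)) =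
      1 - (NormedSpace.exp m⁻¹)⁻¹ := by
    rw [hden0, hden1, NormedSpace.exp_neg]
    ring
  have hdenLim_ne : 1 - (NormedSpace.exp m⁻¹)⁻¹ ≠ 0 :=
    sub_ne_zero.mpr (inv_ne_one.mpr hexp).symm
  have hratio := (isEulerRecurrence_of_coeff ha hb hnum).tendsto_div
    (isEulerRecurrence_of_coeff ha hb hden) hm (hdenLim ▸ hdenLim_ne)
  have hvalue : (NormedSpace.exp m⁻¹)⁻¹ / (1 - (NormedSpace.exp m⁻¹)⁻¹) =
      1 / (NormedSpace.exp m⁻¹ - 1) := by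
    have hexp0 : NormedSpace.exp m⁻¹ ≠ 0 := (NormedSpace.isUnit_exp m⁻¹).ne_zero
    rw [← mul_div_mul_left _ _ hexp0, mul_sub, mul_inv_cancel₀ hexp0, mul_one]
  rw [hnumLim, hdenLim, hvalue] at hratio
  exact (tendsto_add_atTop_iff_nat 1).mpr hratio

theorem euler_cf_sqrt_e
    (a b num den : ℕ → ℝ)
    (hb0 : b 0 = 1)
    (ha : ∀ k : ℕ, 1 ≤ k → a k = 2 * (k : ℝ))
    (hb : ∀ k : ℕ, 1 ≤ k → b k = 2 * (k : ℝ) + 1)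
    (hnum0 : num 0 = 1) (hnum1 : num 1 = b 0)
    (hden0 : den 0 = 0) (hden1 : den 1 = 1)
    (hnum : ∀ n : ℕ, num (n + 2) = b (n + 1) * num (n + 1) + a (n + 1) * num n)
    (hden : ∀ n : ℕ, den (n + 2) = b (n + 1) * den (n + 1) + a (n + 1) * den n) :
    Tendsto (fun n : ℕ => num (n + 1) / den (n + 1)) atTop
      (𝓝 (1 / (Real.exp (1 / 2) - 1))) := by
  rw [one_div 2, Real.exp_eq_exp_ℝ]
  exact euler_cf_sqrt_e_general (by simp [← Real.exp_eq_exp_ℝ]) (by linarith) ha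
    (fun k hk => by linarith [hb k hk]) hnum0 hnum1 hden0 hden1 hnum hden
end
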